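/- Let λ0, λ1 ∈ ℝ with λ0 > 0, λ1 > 0, λ0 + λ1 = 1, and ρ := Matrix.diagonal ![ (λ0 : ℂ), (λ1 : ℂ) ]. Let A1, A2 be Hermitian 2×2 complex matrices with trace 0, and let L1, L2 be their SLDs relative to ρ. Then (1/2) · Tr[ρ * (L1 * L2 + L2 * L1)] = (((A1 0 0).re · (A2 0 0).re)/(λ0·λ1) + 4 · ((A1 0 1) * star (A2 0 1)).re : ℂ); i.e., the quantum Fisher information matrix entry equals u1·u2/(λ0λ1) + 4·Re(s1·conj(s2)), where u_i := (A_i 0 0).re and s_i := A_i 0 1. -/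

import Mathlib

open Matrix

/-- The symmetric logarithmic derivative of `A` relative to `ρ = diagonal ![λ0, λ1]`,
defined entrywise by `L μ ν = 2 ⬝ A μ ν / (λμ + λν)`. -/
noncomputable def sld (l0 l1 : ℝ) (A : Matrix (Fin 2) (Fin 2) ℂ) : Matrix (Fin 2) (Fin 2) ℂ :=
  Matrix.of fun μ ν => 2 * A μ ν / ((![l0, l1] μ + ![l0, l1] ν : ℝ) : ℂ)

/-!
If `ρ * L₁ + L₁ * ρ = 2 * A₁`, then cyclicity of the trace gives
`Tr[ρ * (L₁ * L₂ + L₂ * L₁)] = Tr[(ρ * L₁ + L₁ * ρ) * L₂] = 2 * Tr[A₁ * L₂]`.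
So a Fisher information entry is `Tr[A₁ * L₂]`, which is linear in one logarithmic derivative
rather than quadratic in two.
-/

section SLDEquation

variable {n R : Type*} [Fintype n] [CommSemiring R]

/-- `L` is a symmetric logarithmic derivative of the state `ρ` in the direction `A`, in the
basis-free form `A = (ρ L + L ρ) / 2`; the factor `2` is kept on the side of `A` so that no
division is needed. -/
def IsSLD (ρ A L : Matrix n n R) : Prop :=
  ρ * L + L * ρ = (2 : R) • A

theorem IsSLD.trace_mul_anticommutator {ρ A L : Matrix n n R} (hL : IsSLD ρ A L)
    (M : Matrix n n R) : trace (ρ * (L * M + M * L)) = 2 * trace (A * M) :=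
  calc trace (ρ * (L * M + M * L))
      = trace ((ρ * L + L * ρ) * M) := by
        rw [mul_add, add_mul, trace_add, trace_add, ← mul_assoc, ← mul_assoc,
          trace_mul_cycle ρ M L]
    _ = 2 * trace (A * M) := by
        rw [hL, smul_mul_assoc, trace_smul, smul_eq_mul]

theorem isSLD_diagonal_iff [DecidableEq n] {d : n → R} {A L : Matrix n n R} :
    IsSLD (diagonal d) A L ↔ ∀ i j, (d i + d j) * L i j = 2 * A i j := by
  simp only [IsSLD, ← Matrix.ext_iff, Matrix.add_apply, diagonal_mul, mul_diagonal,
    Matrix.smul_apply, smul_eq_mul, add_mul, mul_comm (L _ _)]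

end SLDEquation

theorem isSLD_sld {l0 l1 : ℝ} (hl0 : l0 ≠ 0) (hl1 : l1 ≠ 0) (hsum : l0 + l1 ≠ 0)
    (A : Matrix (Fin 2) (Fin 2) ℂ) :
    IsSLD (diagonal ![(l0 : ℂ), (l1 : ℂ)]) A (sld l0 l1 A) := by
  have hne : ∀ i j, ![(l0 : ℂ), (l1 : ℂ)] i + ![(l0 : ℂ), (l1 : ℂ)] j ≠ 0 := by
    have hsum' : (l0 : ℂ) + l1 ≠ 0 := by exact_mod_cast hsum
    simp [Fin.forall_fin_two, hl0, hl1, hsum', add_comm (l1 : ℂ)]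
  have hcast : ∀ i, ((![l0, l1] i : ℝ) : ℂ) = ![(l0 : ℂ), (l1 : ℂ)] i := by
    simp [Fin.forall_fin_two]
  refine isSLD_diagonal_iff.mpr fun i j => ?_
  rw [sld, of_apply, Complex.ofReal_add, hcast, hcast, mul_div_cancel₀ _ (hne i j)]

theorem trace_mul_sld (l0 l1 : ℝ) (A B : Matrix (Fin 2) (Fin 2) ℂ) :
    trace (A * sld l0 l1 B)
      = A 0 0 * B 0 0 / l0 + A 1 1 * B 1 1 / l1
        + 2 * (A 0 1 * B 1 0 + A 1 0 * B 0 1) / (l0 + l1) := by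
  simp only [trace_fin_two, mul_apply, Fin.sum_univ_two, sld, of_apply, cons_val_zero,
    cons_val_one, Complex.ofReal_add, ← two_mul, mul_div_mul_left _ _ (two_ne_zero' ℂ),
    add_comm (l1 : ℂ) l0]
  ring

section Hermitian

variable {n : Type*} {A B : Matrix n n ℂ}

theorem diag_mul_diag_eq_re_of_isHermitian (hA : A.IsHermitian) (hB : B.IsHermitian) (i : n) :
    A i i * B i i = ((A i i).re * (B i i).re : ℝ) := by
  rw [Complex.ofReal_mul, Complex.conj_eq_iff_re.mp (hA.apply i i),
    Complex.conj_eq_iff_re.mp (hB.apply i i)]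

theorem mul_add_mul_eq_two_mul_re_of_isHermitian (hA : A.IsHermitian) (hB : B.IsHermitian)
    (i j : n) :
    A i j * B j i + A j i * B i j = (2 * (A i j * star (B i j)).re : ℝ) := by
  rw [← Complex.add_conj, starRingEnd_apply, star_mul, star_star, hA.apply j i, hB.apply j i,
    mul_comm (B i j)]

end Hermitian

theorem trace_mul_sld_of_isHermitian (l0 l1 : ℝ) {A B : Matrix (Fin 2) (Fin 2) ℂ}
    (hA : A.IsHermitian) (hB : B.IsHermitian) :
    trace (A * sld l0 l1 B)
      = (((A 0 0).re * (B 0 0).re / l0 + (A 1 1).re * (B 1 1).re / l1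
          + 4 * (A 0 1 * star (B 0 1)).re / (l0 + l1) : ℝ) : ℂ) := by
  rw [trace_mul_sld, diag_mul_diag_eq_re_of_isHermitian hA hB,
    diag_mul_diag_eq_re_of_isHermitian hA hB,
    mul_add_mul_eq_two_mul_re_of_isHermitian hA hB]
  push_cast
  ring

theorem re_apply_one_one_of_trace_eq_zero {A : Matrix (Fin 2) (Fin 2) ℂ} (hA : A.trace = 0) :
    (A 1 1).re = -(A 0 0).re := by
  rw [trace_fin_two] at hA
  rw [eq_neg_of_add_eq_zero_right hA, Complex.neg_re]

theorem stmt_7_general {l0 l1 : ℝ} (hl0 : l0 ≠ 0) (hl1 : l1 ≠ 0) (hsum : l0 + l1 ≠ 0)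
    {A1 A2 : Matrix (Fin 2) (Fin 2) ℂ} (hA1 : A1.IsHermitian) (hA2 : A2.IsHermitian)
    (hA1tr : A1.trace = 0) (hA2tr : A2.trace = 0) :
    (1 / 2 : ℂ) * trace (diagonal ![(l0 : ℂ), (l1 : ℂ)]
        * (sld l0 l1 A1 * sld l0 l1 A2 + sld l0 l1 A2 * sld l0 l1 A1))
      = (((l0 + l1) * ((A1 0 0).re * (A2 0 0).re) / (l0 * l1)
          + 4 * (A1 0 1 * star (A2 0 1)).re / (l0 + l1) : ℝ) : ℂ) := by
  rw [(isSLD_sld hl0 hl1 hsum A1).trace_mul_anticommutator, ← mul_assoc,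
    one_div_mul_cancel two_ne_zero, one_mul, trace_mul_sld_of_isHermitian l0 l1 hA1 hA2,
    re_apply_one_one_of_trace_eq_zero hA1tr, re_apply_one_one_of_trace_eq_zero hA2tr, neg_mul_neg]
  congr 2
  field_simp
  ring

theorem stmt_7 (l0 l1 : ℝ) (hl0 : 0 < l0) (hl1 : 0 < l1) (hsum : l0 + l1 = 1)
    (ρ : Matrix (Fin 2) (Fin 2) ℂ) (hρ : ρ = Matrix.diagonal ![(l0 : ℂ), (l1 : ℂ)])
    (A1 A2 : Matrix (Fin 2) (Fin 2) ℂ)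
    (hA1 : A1.IsHermitian) (hA2 : A2.IsHermitian)
    (hA1tr : A1.trace = 0) (hA2tr : A2.trace = 0)
    (L1 L2 : Matrix (Fin 2) (Fin 2) ℂ) (hL1 : L1 = sld l0 l1 A1) (hL2 : L2 = sld l0 l1 A2) :
    (1 / 2 : ℂ) * Matrix.trace (ρ * (L1 * L2 + L2 * L1))
      = (((A1 0 0).re * (A2 0 0).re / (l0 * l1)
          + 4 * (A1 0 1 * star (A2 0 1)).re : ℝ) : ℂ) := by
  subst hρ hL1 hL2
  simpa only [hsum, one_mul, div_one] using
    stmt_7_general hl0.ne' hl1.ne' (hsum ▸ one_ne_zero) hA1 hA2 hA1tr hA2tr
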